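/- Let d ≥ 2. For every measurable map n : Ω → S^{d-1} on an open set Ω ⊆ ℝ^N (N ≥ 1) and every measurable function ρ : (0,∞) → [0,∞), it holds (with all integrals valued in [0,∞]): ∫_{SO(d)} ∬_{Ω×Ω} arccos⟪F_R(n(x)), F_R(n(y))⟫ / |x−y| · ρ(|x−y|) dx dy dμ(R) ≤ 2 ∬_{Ω×Ω} min( arccos⟪n(x), n(y)⟫, π − arccos⟪n(x), n(y)⟫ ) / |x−y| · ρ(|x−y|) dx dy. -/

import Mathlib

/-!
STATEMENT 4: Lemma 3.1 of the paper: the averaging inequality over `SO(d)` for the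
geodesic mollified energies of the liftings `F_R ∘ n`, where `F_R(x) = R⁻¹ F(Rx)` and
`F` flips a vector to the (closed) upper hemisphere. `μ` is the Haar probability measure
on `SO(d)`, formalized as any bi-invariant Borel probability measure.
-/

noncomputable section
open MeasureTheory Real Filter
open scoped ENNReal RealInnerProductSpace

instance {m n : Type*} : MeasurableSpace (Matrix m n ℝ) := MeasurableSpace.pi

/-- The special orthogonal group `SO(d)` as matrices. -/
abbrev SOd (d : ℕ) := Matrix.specialOrthogonalGroup (Fin d) ℝ

/-- The last coordinate `⟪x, e_d⟫` of a vector `x ∈ ℝ^d`. -/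
def lastCoord {d : ℕ} (x : EuclideanSpace ℝ (Fin d)) : ℝ :=
  if h : 0 < d then x ⟨d - 1, Nat.sub_lt h Nat.one_pos⟩ else 0

/-- `F : S^{d-1} → S^{d-1}`, `F(x) = x` if `⟪x, e_d⟫ ≥ 0` and `F(x) = -x` otherwise. -/
def Fsym {d : ℕ} (x : EuclideanSpace ℝ (Fin d)) : EuclideanSpace ℝ (Fin d) :=
  if 0 ≤ lastCoord x then x else -x

/-- Action of a matrix on `ℝ^d` (Euclidean space) by matrix-vector multiplication. -/
def rotAct {d : ℕ} (R : Matrix (Fin d) (Fin d) ℝ) (x : EuclideanSpace ℝ (Fin d)) :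
    EuclideanSpace ℝ (Fin d) :=
  (EuclideanSpace.equiv (Fin d) ℝ).symm (R.mulVec (EuclideanSpace.equiv (Fin d) ℝ x))

/-- Action of `R ∈ SO(d)` on `ℝ^d`. -/
def rot {d : ℕ} (R : SOd d) (x : EuclideanSpace ℝ (Fin d)) : EuclideanSpace ℝ (Fin d) :=
  rotAct (R : Matrix (Fin d) (Fin d) ℝ) x

/-- `F_R(x) = R⁻¹ F(Rx)` (for `R ∈ SO(d)`, `R⁻¹ = Rᵀ`). -/
def FR {d : ℕ} (R : SOd d) (x : EuclideanSpace ℝ (Fin d)) : EuclideanSpace ℝ (Fin d) :=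
  rotAct (Matrix.transpose (R : Matrix (Fin d) (Fin d) ℝ)) (Fsym (rot R x))

/-!
Off a null set of rotations, the angle between `F_R x` and `F_R y` is `θ`, the angle between `x`
and `y`, unless the hyperplane orthogonal to `R⁻¹ e_d` separates `x` from `y`, in which case it is
`π - θ`. If `K θ ≤ π`, then `K` consecutive arcs of length `θ` on the great circle through `x` and
`y` fill at most half of it, so a hyperplane separates the endpoints of at most one of them. By
invariance the separation probability `p` is the same for all of these arcs, whence `K p ≤ 1` and,
choosing `K = ⌊π / θ⌋`, `(π - θ) p ≤ θ`. The expected angle is thus at most `2 θ`. Since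
`F_R (-y) = F_R y` almost surely, it is also at most `2 (π - θ)`.
-/

open InnerProductGeometry Module

section GreatCircle

/-- The point at parameter `s` of the great circle that starts at `x` in the direction `k`, for
orthogonal unit vectors `x` and `k`. -/
def greatCircle {V : Type*} [AddCommGroup V] [Module ℝ V] (x k : V) (s : ℝ) : V :=
  cos s • x + sin s • k

section Module

variable {V : Type*} [AddCommGroup V] [Module ℝ V] {x k : V}

@[simp]
lemma greatCircle_zero : greatCircle x k 0 = x := by simp [greatCircle]

lemma sin_sub_smul_greatCircle (a b c : ℝ) :
    sin (c - a) • greatCircle x k b =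
      sin (c - b) • greatCircle x k a + sin (b - a) • greatCircle x k c := by
  simp only [greatCircle, sin_sub]
  module

lemma map_greatCircle_pos_of_mem_Icc (ℓ : V →ₗ[ℝ] ℝ) {a b c : ℝ} (hab : a ≤ b) (hbc : b ≤ c)
    (hca : c ≤ a + π) (ha : 0 < ℓ (greatCircle x k a)) (hc : 0 < ℓ (greatCircle x k c)) :
    0 < ℓ (greatCircle x k b) := by
  rcases hab.eq_or_lt with rfl | hab
  · exact ha
  rcases hbc.eq_or_lt with rfl | hbc
  · exact hc
  have hsin_ba : 0 < sin (b - a) := sin_pos_of_pos_of_lt_pi (by linarith) (by linarith)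
  have hsin_cb : 0 < sin (c - b) := sin_pos_of_pos_of_lt_pi (by linarith) (by linarith)
  have hsin_ca : 0 ≤ sin (c - a) := sin_nonneg_of_nonneg_of_le_pi (by linarith) (by linarith)
  have hℓ := congrArg ℓ (sin_sub_smul_greatCircle (x := x) (k := k) a b c)
  simp only [map_add, map_smul, smul_eq_mul] at hℓ
  exact pos_of_mul_pos_right (hℓ ▸ by positivity) hsin_ca

lemma map_greatCircle_mul_nonneg (ℓ : V →ₗ[ℝ] ℝ) {a b c d : ℝ} (hab : a ≤ b) (hbc : b ≤ c)
    (hcd : c ≤ d) (hda : d ≤ a + π)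
    (hneg : ℓ (greatCircle x k a) * ℓ (greatCircle x k b) < 0) :
    0 ≤ ℓ (greatCircle x k c) * ℓ (greatCircle x k d) := by
  wlog ha : 0 < ℓ (greatCircle x k a) generalizing ℓ
  · simpa using this (-ℓ) (by simpa using hneg)
      (by simpa using (not_lt.1 ha).lt_of_ne (left_ne_zero_of_mul hneg.ne))
  have hb : ℓ (greatCircle x k b) < 0 := neg_of_mul_neg_right hneg ha.le
  have nonpos_of_ge {s : ℝ} (hbs : b ≤ s) (hsa : s ≤ a + π) : ℓ (greatCircle x k s) ≤ 0 :=
    not_lt.1 fun hs => hb.not_gt (map_greatCircle_pos_of_mem_Icc ℓ hab hbs hsa ha hs)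
  exact mul_nonneg_of_nonpos_of_nonpos
    (nonpos_of_ge hbc (hcd.trans hda)) (nonpos_of_ge (hbc.trans hcd) hda)

end Module

variable {E : Type*} [NormedAddCommGroup E] [InnerProductSpace ℝ E] {x y k : E}

lemma inner_greatCircle_greatCircle (hx : ‖x‖ = 1) (hk : ‖k‖ = 1) (hxk : ⟪x, k⟫ = 0) (s t : ℝ) :
    ⟪greatCircle x k s, greatCircle x k t⟫ = cos (s - t) := by
  have hkx : ⟪k, x⟫ = 0 := by rw [real_inner_comm, hxk]
  simp only [greatCircle, inner_add_left, inner_add_right, real_inner_smul_left,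
    real_inner_smul_right, inner_self_eq_one_of_norm_eq_one hx,
    inner_self_eq_one_of_norm_eq_one hk, hxk, hkx, cos_sub]
  ring

lemma norm_greatCircle (hx : ‖x‖ = 1) (hk : ‖k‖ = 1) (hxk : ⟪x, k⟫ = 0) (s : ℝ) :
    ‖greatCircle x k s‖ = 1 := by
  rw [norm_eq_sqrt_real_inner, inner_greatCircle_greatCircle hx hk hxk, sub_self, cos_zero,
    sqrt_one]

lemma reflection_orthogonal_greatCircle (hx : ‖x‖ = 1) (hk : ‖k‖ = 1) (hxk : ⟪x, k⟫ = 0)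
    (φ s : ℝ) :
    (ℝ ∙ greatCircle x k φ)ᗮ.reflection (greatCircle x k s) = -greatCircle x k (2 * φ - s) := by
  rw [Submodule.reflection_orthogonal_apply, Submodule.reflection_singleton_apply,
    norm_greatCircle hx hk hxk, inner_greatCircle_greatCircle hx hk hxk]
  have hcos : cos (2 * φ - s) = 2 * cos (φ - s) * cos φ - cos s := by
    rw [show 2 * φ - s = φ + (φ - s) by ring, cos_add, eq_sub_iff_add_eq]
    nth_rw 3 [show s = φ - (φ - s) by ring]
    rw [cos_sub φ (φ - s)]
    ring
  have hsin : sin (2 * φ - s) = 2 * cos (φ - s) * sin φ - sin s := by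
    rw [show 2 * φ - s = φ + (φ - s) by ring, sin_add, eq_sub_iff_add_eq]
    nth_rw 3 [show s = φ - (φ - s) by ring]
    rw [sin_sub φ (φ - s)]
    ring
  simp only [greatCircle, hcos, hsin, RCLike.ofReal_real_eq_id, id_eq, one_pow, div_one]
  module

lemma det_reflection_orthogonal_span_singleton [FiniteDimensional ℝ E] {v : E} (hv : v ≠ 0) :
    LinearMap.det (ℝ ∙ v)ᗮ.reflection.toLinearMap = -1 := by
  rw [Submodule.det_reflection, Submodule.orthogonal_orthogonal, finrank_span_singleton hv, pow_one]

-- Two reflections compose to a rotation by twice the angle between their axes.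
lemma exists_linearIsometryEquiv_greatCircle_add [FiniteDimensional ℝ E] (hx : ‖x‖ = 1)
    (hk : ‖k‖ = 1) (hxk : ⟪x, k⟫ = 0) (t : ℝ) :
    ∃ f : E ≃ₗᵢ[ℝ] E, LinearMap.det f.toLinearMap = 1 ∧
      ∀ s, f (greatCircle x k s) = greatCircle x k (s + t) := by
  have det_eq (φ : ℝ) :
      LinearMap.det (ℝ ∙ greatCircle x k φ)ᗮ.reflection.toLinearMap = -1 :=
    det_reflection_orthogonal_span_singleton <|
      norm_ne_zero_iff.1 (by rw [norm_greatCircle hx hk hxk]; exact one_ne_zero)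
  refine ⟨(ℝ ∙ greatCircle x k 0)ᗮ.reflection.trans (ℝ ∙ greatCircle x k (t / 2))ᗮ.reflection,
    ?_, fun s => ?_⟩
  · have := LinearMap.det_comp (ℝ ∙ greatCircle x k (t / 2))ᗮ.reflection.toLinearMap
      (ℝ ∙ greatCircle x k 0)ᗮ.reflection.toLinearMap
    rw [det_eq, det_eq, neg_mul_neg, one_mul] at this
    exact this
  · rw [LinearIsometryEquiv.trans_apply, reflection_orthogonal_greatCircle hx hk hxk, map_neg,
      reflection_orthogonal_greatCircle hx hk hxk, neg_neg]
    ring_nf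

lemma exists_norm_eq_one_inner_eq_zero (hE : 1 < finrank ℝ E) (x : E) :
    ∃ k : E, ‖k‖ = 1 ∧ ⟪x, k⟫ = 0 := by
  have : Nontrivial (ℝ ∙ x)ᗮ := by
    rw [Submodule.nontrivial_iff_ne_bot, ne_eq, Submodule.orthogonal_eq_bot_iff]
    intro htop
    have hcard : finrank ℝ (ℝ ∙ x) ≤ 1 := by simpa using finrank_span_le_card (R := ℝ) {x}
    rw [htop, finrank_top] at hcard
    omega
  obtain ⟨k, hk⟩ := exists_norm_eq (ℝ ∙ x)ᗮ zero_le_one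
  exact ⟨k, hk, Submodule.mem_orthogonal_singleton_iff_inner_right.1 k.2⟩

lemma norm_sub_cos_angle_smul (hx : ‖x‖ = 1) (hy : ‖y‖ = 1) :
    ‖y - cos (angle x y) • x‖ = sin (angle x y) := by
  refine (sq_eq_sq₀ (norm_nonneg _) (sin_angle_nonneg x y)).1 ?_
  rw [norm_sub_sq_real, real_inner_smul_right, norm_smul, norm_eq_abs, mul_pow, sq_abs,
    real_inner_comm, inner_eq_cos_angle_of_norm_eq_one hx hy, hx, hy, sin_sq]
  ring

lemma exists_greatCircle_angle_eq (hE : 1 < finrank ℝ E) (hx : ‖x‖ = 1) (hy : ‖y‖ = 1) :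
    ∃ k : E, ‖k‖ = 1 ∧ ⟪x, k⟫ = 0 ∧ greatCircle x k (angle x y) = y := by
  set z := y - cos (angle x y) • x with hz
  have hnorm : ‖z‖ = sin (angle x y) := norm_sub_cos_angle_smul hx hy
  suffices ∃ k : E, ‖k‖ = 1 ∧ ⟪x, k⟫ = 0 ∧ ‖z‖ • k = z by
    obtain ⟨k, hk, hxk, hzk⟩ := this
    exact ⟨k, hk, hxk, by rw [greatCircle, ← hnorm, hzk, hz, add_sub_cancel]⟩
  by_cases hz0 : z = 0
  · obtain ⟨k, hk, hxk⟩ := exists_norm_eq_one_inner_eq_zero hE x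
    exact ⟨k, hk, hxk, by rw [hz0, norm_zero, zero_smul]⟩
  · have hxz : ⟪x, z⟫ = 0 := by
      rw [hz, inner_sub_right, real_inner_smul_right, inner_self_eq_one_of_norm_eq_one hx,
        inner_eq_cos_angle_of_norm_eq_one hx hy, mul_one, sub_self]
    exact ⟨NormedSpace.normalize z, NormedSpace.norm_normalize_eq_one_iff.2 hz0,
      by rw [NormedSpace.normalize, real_inner_smul_right, hxz, mul_zero],
      NormedSpace.norm_smul_normalize z⟩

end GreatCircle

section Rotation

variable {d : ℕ}

lemma rotAct_eq_toEuclideanLin (A : Matrix (Fin d) (Fin d) ℝ) (x : EuclideanSpace ℝ (Fin d)) :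
    rotAct A x = A.toEuclideanLin x := rfl

lemma rot_mul (R Q : SOd d) (x : EuclideanSpace ℝ (Fin d)) : rot (R * Q) x = rot R (rot Q x) := by
  simp only [rot, rotAct, ContinuousLinearEquiv.apply_symm_apply, Matrix.mulVec_mulVec]
  rfl

lemma rot_one (x : EuclideanSpace ℝ (Fin d)) : rot (1 : SOd d) x = x := by
  simp [rot, rotAct]

lemma exists_rot_eq (f : EuclideanSpace ℝ (Fin d) ≃ₗᵢ[ℝ] EuclideanSpace ℝ (Fin d))
    (hf : LinearMap.det f.toLinearMap = 1) : ∃ Q : SOd d, ∀ x, rot Q x = f x := by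
  let b := EuclideanSpace.basisFun (Fin d) ℝ
  refine ⟨⟨f.toLinearMap.toMatrix b.toBasis b.toBasis,
    Matrix.mem_specialOrthogonalGroup_iff.2 ⟨f.toMatrix_mem_unitaryGroup b b, ?_⟩⟩, fun x => ?_⟩
  · rw [LinearMap.det_toMatrix, hf]
  · rw [rot, rotAct_eq_toEuclideanLin, Matrix.toEuclideanLin_eq_toLin_orthonormal,
      Matrix.toLin_toMatrix]
    rfl

lemma exists_rot_greatCircle_add {x k : EuclideanSpace ℝ (Fin d)} (hx : ‖x‖ = 1) (hk : ‖k‖ = 1)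
    (hxk : ⟪x, k⟫ = 0) (t : ℝ) :
    ∃ Q : SOd d, ∀ s, rot Q (greatCircle x k s) = greatCircle x k (s + t) := by
  obtain ⟨f, hdet, hf⟩ := exists_linearIsometryEquiv_greatCircle_add hx hk hxk t
  obtain ⟨Q, hQ⟩ := exists_rot_eq f hdet
  exact ⟨Q, fun s => by rw [hQ, hf]⟩

lemma exists_rot_eq_of_norm_eq_one (hd : 2 ≤ d) {x y : EuclideanSpace ℝ (Fin d)} (hx : ‖x‖ = 1)
    (hy : ‖y‖ = 1) : ∃ Q : SOd d, rot Q x = y := by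
  obtain ⟨k, hk, hxk, hxy⟩ :=
    exists_greatCircle_angle_eq (by rwa [finrank_euclideanSpace_fin]) hx hy
  obtain ⟨Q, hQ⟩ := exists_rot_greatCircle_add hx hk hxk (angle x y)
  exact ⟨Q, by simpa [hxy] using hQ 0⟩

/-- The linear functional `x ↦ ⟪Rx, e_d⟫`, whose sign decides between `F_R x = x` and
`F_R x = -x`. -/
def height (R : SOd d) : EuclideanSpace ℝ (Fin d) →ₗ[ℝ] ℝ where
  toFun x := lastCoord (rot R x)
  map_add' x y := by
    unfold lastCoord
    split_ifs <;> simp [rot, rotAct_eq_toEuclideanLin]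
  map_smul' c x := by
    unfold lastCoord
    split_ifs <;> simp [rot, rotAct_eq_toEuclideanLin]

lemma height_apply (R : SOd d) (x : EuclideanSpace ℝ (Fin d)) :
    height R x = lastCoord (rot R x) := rfl

lemma height_rot (R Q : SOd d) (x : EuclideanSpace ℝ (Fin d)) :
    height R (rot Q x) = height (R * Q) x := by
  rw [height_apply, height_apply, rot_mul]

lemma height_ne_zero (hd : 0 < d) (R : SOd d) : height R ≠ 0 := by
  intro h
  have := LinearMap.congr_fun h (rot R⁻¹ (EuclideanSpace.single ⟨d - 1, by omega⟩ 1))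
  rw [height_rot, mul_inv_cancel, height_apply, rot_one] at this
  simp [lastCoord, hd] at this

lemma FR_eq_rot_inv (R : SOd d) (x : EuclideanSpace ℝ (Fin d)) :
    FR R x = rot R⁻¹ (Fsym (rot R x)) := rfl

lemma FR_eq_ite (R : SOd d) (x : EuclideanSpace ℝ (Fin d)) :
    FR R x = if 0 ≤ height R x then x else -x := by
  have rot_neg (Q : SOd d) (z : EuclideanSpace ℝ (Fin d)) : rot Q (-z) = -rot Q z := by
    simp [rot, rotAct_eq_toEuclideanLin]
  rw [FR_eq_rot_inv, Fsym, height_apply]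
  split_ifs
  · rw [← rot_mul, inv_mul_cancel, rot_one]
  · rw [rot_neg, ← rot_mul, inv_mul_cancel, rot_one]

lemma FR_of_height_pos {R : SOd d} {x : EuclideanSpace ℝ (Fin d)} (h : 0 < height R x) :
    FR R x = x := by
  rw [FR_eq_ite, if_pos h.le]

lemma FR_of_height_neg {R : SOd d} {x : EuclideanSpace ℝ (Fin d)} (h : height R x < 0) :
    FR R x = -x := by
  rw [FR_eq_ite, if_neg h.not_ge]

lemma norm_FR (R : SOd d) (x : EuclideanSpace ℝ (Fin d)) : ‖FR R x‖ = ‖x‖ := by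
  rw [FR_eq_ite]
  split_ifs
  · rfl
  · rw [norm_neg]

lemma FR_neg {R : SOd d} {x : EuclideanSpace ℝ (Fin d)} (h : height R x ≠ 0) :
    FR R (-x) = FR R x := by
  rcases h.lt_or_gt with h | h
  · rw [FR_of_height_neg h, FR_of_height_pos (by simpa using h)]
  · rw [FR_of_height_pos h, FR_of_height_neg (by simpa using h), neg_neg]

/-- The rotations `R` for which the hyperplane orthogonal to `R⁻¹ e_d` strictly separates `x`
from `y`. -/
def separatingRotations (x y : EuclideanSpace ℝ (Fin d)) : Set (SOd d) :=
  {R | height R x * height R y < 0}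

lemma angle_FR_of_mem_separatingRotations {R : SOd d} {x y : EuclideanSpace ℝ (Fin d)}
    (h : R ∈ separatingRotations x y) : angle (FR R x) (FR R y) = π - angle x y := by
  rcases mul_neg_iff.1 (show height R x * height R y < 0 from h) with ⟨hx, hy⟩ | ⟨hx, hy⟩
  · rw [FR_of_height_pos hx, FR_of_height_neg hy, angle_neg_right]
  · rw [FR_of_height_neg hx, FR_of_height_pos hy, angle_neg_left]

lemma angle_FR_of_notMem_separatingRotations {R : SOd d} {x y : EuclideanSpace ℝ (Fin d)}
    (hx : height R x ≠ 0) (hy : height R y ≠ 0) (h : R ∉ separatingRotations x y) :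
    angle (FR R x) (FR R y) = angle x y := by
  have hpos : 0 < height R x * height R y := (not_lt.1 h).lt_of_ne' (mul_ne_zero hx hy)
  rcases mul_pos_iff.1 hpos with ⟨hx, hy⟩ | ⟨hx, hy⟩
  · rw [FR_of_height_pos hx, FR_of_height_pos hy]
  · rw [FR_of_height_neg hx, FR_of_height_neg hy, angle_neg_neg]

lemma separatingRotations_rot (Q : SOd d) (x y : EuclideanSpace ℝ (Fin d)) :
    separatingRotations (rot Q x) (rot Q y) = (· * Q) ⁻¹' separatingRotations x y := by
  ext R
  simp only [separatingRotations, height_rot, Set.mem_ofPred_eq, Set.mem_preimage]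

lemma disjoint_separatingRotations_greatCircle {x k : EuclideanSpace ℝ (Fin d)} {a b c e : ℝ}
    (hab : a ≤ b) (hbc : b ≤ c) (hce : c ≤ e) (hea : e ≤ a + π) :
    Disjoint (separatingRotations (greatCircle x k a) (greatCircle x k b))
      (separatingRotations (greatCircle x k c) (greatCircle x k e)) :=
  Set.disjoint_left.2 fun R hab_neg hce_neg =>
    (map_greatCircle_mul_nonneg (height R) hab hbc hce hea hab_neg).not_gt hce_neg

end Rotation

section Measurability

variable {d : ℕ} {α : Type*} [MeasurableSpace α] {R : α → SOd d} {x : α → EuclideanSpace ℝ (Fin d)}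

lemma measurable_entry (i j : Fin d) :
    Measurable fun R : SOd d => (R : Matrix (Fin d) (Fin d) ℝ) i j :=
  (measurable_pi_apply j).comp ((measurable_pi_apply i).comp measurable_subtype_coe)

instance : MeasurableMul (SOd d) where
  measurable_const_mul Q := by
    refine Measurable.subtype_mk (f := fun R : SOd d => (Q : Matrix (Fin d) (Fin d) ℝ) * R) ?_
    refine measurable_pi_lambda _ fun i => measurable_pi_lambda _ fun j => ?_
    simp only [Matrix.mul_apply]
    exact Finset.measurable_sum _ fun l _ => (measurable_entry l j).const_mul _
  measurable_mul_const Q := by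
    refine Measurable.subtype_mk (f := fun R : SOd d => (R : Matrix (Fin d) (Fin d) ℝ) * Q) ?_
    refine measurable_pi_lambda _ fun i => measurable_pi_lambda _ fun j => ?_
    simp only [Matrix.mul_apply]
    exact Finset.measurable_sum _ fun l _ => (measurable_entry i l).mul_const _

@[fun_prop]
lemma measurable_height (hR : Measurable R) (hx : Measurable x) :
    Measurable fun a => height (R a) (x a) := by
  simp only [height_apply, lastCoord]
  split_ifs with hd
  · change Measurable fun a => ∑ j, (R a : Matrix (Fin d) (Fin d) ℝ) ⟨d - 1, _⟩ j * x a j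
    exact Finset.measurable_sum _ fun j _ => ((measurable_entry _ j).comp hR).mul (by fun_prop)
  · exact measurable_const

@[fun_prop]
lemma measurable_FR (hR : Measurable R) (hx : Measurable x) :
    Measurable fun a => FR (R a) (x a) := by
  simp only [FR_eq_ite]
  exact .ite (measurableSet_le measurable_const (measurable_height hR hx)) hx hx.neg

lemma measurableSet_separatingRotations (x y : EuclideanSpace ℝ (Fin d)) :
    MeasurableSet (separatingRotations x y) :=
  measurableSet_lt (by fun_prop) measurable_const

end Measurability

section Averaging

variable {d : ℕ} {μ : Measure (SOd d)} [μ.IsMulRightInvariant] {x y : EuclideanSpace ℝ (Fin d)}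

lemma ae_height_rot_ne_zero_iff (Q : SOd d) :
    (∀ᵐ R ∂μ, height R (rot Q x) ≠ 0) ↔ ∀ᵐ R ∂μ, height R x ≠ 0 := by
  simp only [height_rot, ae_iff]
  exact iff_of_eq (congrArg (· = 0) (measure_preimage_mul_right μ Q {R | ¬height R x ≠ 0}))

-- By Fubini almost every vector has almost surely nonzero height, and `SO(d)` acts transitively
-- on directions.
lemma ae_height_ne_zero [SFinite μ] (hd : 2 ≤ d) (hx : ‖x‖ = 1) : ∀ᵐ R ∂μ, height R x ≠ 0 := by
  have ae_vector (R : SOd d) : ∀ᵐ y : EuclideanSpace ℝ (Fin d), height R y ≠ 0 := by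
    have hker : LinearMap.ker (height R) ≠ ⊤ :=
      mt LinearMap.ker_eq_top.1 (height_ne_zero (by omega) R)
    simp only [ae_iff, not_not]
    exact Measure.addHaar_submodule volume _ hker
  have ae_rotation : ∀ᵐ y : EuclideanSpace ℝ (Fin d), ∀ᵐ R ∂μ, height R y ≠ 0 :=
    (Measure.ae_ae_comm (measurable_height measurable_fst measurable_snd
      (measurableSet_singleton 0)).compl).1
      (.of_forall ae_vector)
  have : Nontrivial (EuclideanSpace ℝ (Fin d)) := ⟨x, 0, norm_ne_zero_iff.1 (by simp [hx])⟩
  obtain ⟨y, hy, hy0⟩ := (ae_rotation.and (Measure.ae_ne volume 0)).exists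
  obtain ⟨Q, hQ⟩ := exists_rot_eq_of_norm_eq_one hd hx (NormedSpace.norm_normalize_eq_one_iff.2 hy0)
  rw [← ae_height_rot_ne_zero_iff Q, hQ]
  filter_upwards [hy] with R hR
  simp [NormedSpace.normalize, hR, hy0]

lemma measure_separatingRotations_rot (Q : SOd d) :
    μ (separatingRotations (rot Q x) (rot Q y)) = μ (separatingRotations x y) := by
  rw [separatingRotations_rot, measure_preimage_mul_right]

lemma natCast_mul_measure_separatingRotations_le (hd : 2 ≤ d) (hx : ‖x‖ = 1) (hy : ‖y‖ = 1)
    {K : ℕ} (hK : K * angle x y ≤ π) :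
    K * μ (separatingRotations x y) ≤ μ Set.univ := by
  obtain ⟨k, hk, hxk, hxy⟩ :=
    exists_greatCircle_angle_eq (by rwa [finrank_euclideanSpace_fin]) hx hy
  set θ := angle x y
  have hθ : 0 ≤ θ := angle_nonneg x y
  let S (i : ℕ) : Set (SOd d) :=
    separatingRotations (greatCircle x k (i * θ)) (greatCircle x k ((i + 1) * θ))
  have measure_S (i : ℕ) : μ (S i) = μ (separatingRotations x y) := by
    obtain ⟨Q, hQ⟩ := exists_rot_greatCircle_add hx hk hxk (i * θ)
    have hQx : rot Q x = greatCircle x k (i * θ) := by simpa using hQ 0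
    have hQy : rot Q y = greatCircle x k ((i + 1) * θ) := by
      rw [add_one_mul, add_comm, ← hQ, hxy]
    rw [← measure_separatingRotations_rot (x := x) (y := y) Q, hQx, hQy]
  have disjoint_of_lt {i j : ℕ} (hij : i < j) (hj : j < K) : Disjoint (S i) (S j) := by
    have hij' : (i + 1 : ℝ) ≤ j := by exact_mod_cast hij
    have hj' : (j + 1 : ℝ) ≤ K := by exact_mod_cast hj
    apply disjoint_separatingRotations_greatCircle <;> nlinarith [i.cast_nonneg (α := ℝ)]
  have pairwiseDisjoint_S : (Finset.range K : Set ℕ).PairwiseDisjoint S := by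
    intro i hi j hj hij
    rw [Finset.coe_range, Set.mem_Iio] at hi hj
    exact hij.lt_or_gt.elim (disjoint_of_lt · hj) fun hji => (disjoint_of_lt hji hi).symm
  calc K * μ (separatingRotations x y)
      = ∑ i ∈ Finset.range K, μ (S i) := by simp [measure_S]
    _ = μ (⋃ i ∈ Finset.range K, S i) :=
        (measure_biUnion_finset pairwiseDisjoint_S
          fun i _ => measurableSet_separatingRotations _ _).symm
    _ ≤ μ Set.univ := measure_mono (Set.subset_univ _)

lemma pi_sub_angle_mul_measure_separatingRotations_le (hd : 2 ≤ d) (hx : ‖x‖ = 1) (hy : ‖y‖ = 1) :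
    ENNReal.ofReal (π - angle x y) * μ (separatingRotations x y) ≤
      ENNReal.ofReal (angle x y) * μ Set.univ := by
  rcases (angle_nonneg x y).eq_or_lt with hθ | hθ
  · obtain ⟨k, -, -, hxy⟩ :=
      exists_greatCircle_angle_eq (by rwa [finrank_euclideanSpace_fin]) hx hy
    rw [← hθ, greatCircle_zero] at hxy
    simp [separatingRotations, ← hxy, (mul_self_nonneg _).not_gt]
  set θ := angle x y
  set K := ⌊π / θ⌋₊
  have hKθ : K * θ ≤ π := (le_div_iff₀ hθ).1 (Nat.floor_le (by positivity))
  have hπ : π < (K + 1) * θ := (div_lt_iff₀ hθ).1 (Nat.lt_floor_add_one _)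
  calc ENNReal.ofReal (π - θ) * μ (separatingRotations x y)
      ≤ ENNReal.ofReal (θ * K) * μ (separatingRotations x y) := by gcongr; linarith
    _ = ENNReal.ofReal θ * (K * μ (separatingRotations x y)) := by
        rw [ENNReal.ofReal_mul hθ.le, ENNReal.ofReal_natCast, mul_assoc]
    _ ≤ ENNReal.ofReal θ * μ Set.univ := by
        gcongr
        exact natCast_mul_measure_separatingRotations_le hd hx hy hKθ

variable [IsProbabilityMeasure μ]

lemma lintegral_angle_FR_le_two_mul_angle (hd : 2 ≤ d) (hx : ‖x‖ = 1) (hy : ‖y‖ = 1) :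
    ∫⁻ R, ENNReal.ofReal (angle (FR R x) (FR R y)) ∂μ ≤ 2 * ENNReal.ofReal (angle x y) := by
  have angle_FR_le : ∀ᵐ R ∂μ, ENNReal.ofReal (angle (FR R x) (FR R y)) ≤
      ENNReal.ofReal (angle x y) +
        (separatingRotations x y).indicator (fun _ => ENNReal.ofReal (π - angle x y)) R := by
    filter_upwards [ae_height_ne_zero hd hx, ae_height_ne_zero hd hy] with R hRx hRy
    by_cases hR : R ∈ separatingRotations x y
    · rw [angle_FR_of_mem_separatingRotations hR, Set.indicator_of_mem hR]
      exact le_add_self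
    · rw [angle_FR_of_notMem_separatingRotations hRx hRy hR]
      exact le_self_add
  calc ∫⁻ R, ENNReal.ofReal (angle (FR R x) (FR R y)) ∂μ
      ≤ ENNReal.ofReal (angle x y) +
          ENNReal.ofReal (π - angle x y) * μ (separatingRotations x y) := by
        refine (lintegral_mono_ae angle_FR_le).trans_eq ?_
        rw [lintegral_add_left measurable_const, lintegral_const, measure_univ, mul_one,
          lintegral_indicator_const (measurableSet_separatingRotations x y)]
    _ ≤ ENNReal.ofReal (angle x y) + ENNReal.ofReal (angle x y) := by
        gcongr
        simpa using pi_sub_angle_mul_measure_separatingRotations_le (μ := μ) hd hx hy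
    _ = 2 * ENNReal.ofReal (angle x y) := (two_mul _).symm

lemma lintegral_angle_FR_le_two_mul_min (hd : 2 ≤ d) (hx : ‖x‖ = 1) (hy : ‖y‖ = 1) :
    ∫⁻ R, ENNReal.ofReal (angle (FR R x) (FR R y)) ∂μ ≤
      2 * ENNReal.ofReal (min (angle x y) (π - angle x y)) := by
  have le_supplement : ∫⁻ R, ENNReal.ofReal (angle (FR R x) (FR R y)) ∂μ ≤
      2 * ENNReal.ofReal (π - angle x y) := by
    rw [← angle_neg_right]
    refine le_of_eq_of_le (lintegral_congr_ae ?_)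
      (lintegral_angle_FR_le_two_mul_angle hd hx (by rwa [norm_neg]))
    filter_upwards [ae_height_ne_zero hd hy] with R hR
    rw [FR_neg hR]
  rcases min_choice (angle x y) (π - angle x y) with hmin | hmin <;> rw [hmin]
  · exact lintegral_angle_FR_le_two_mul_angle hd hx hy
  · exact le_supplement

lemma lintegral_lintegral_arccos_inner_FR_le {X : Type*} [MeasurableSpace X] {ν : Measure X}
    [SFinite ν] (hd : 2 ≤ d) {f g : X → EuclideanSpace ℝ (Fin d)} (hf : Measurable f)
    (hg : Measurable g) (hf_norm : ∀ p, ‖f p‖ = 1) (hg_norm : ∀ p, ‖g p‖ = 1) {w : X → ℝ≥0∞}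
    (hw : Measurable w) :
    ∫⁻ R, ∫⁻ p, ENNReal.ofReal (arccos ⟪FR R (f p), FR R (g p)⟫) * w p ∂ν ∂μ ≤
      2 * ∫⁻ p, ENNReal.ofReal (min (arccos ⟪f p, g p⟫) (π - arccos ⟪f p, g p⟫)) * w p ∂ν := by
  calc ∫⁻ R, ∫⁻ p, ENNReal.ofReal (arccos ⟪FR R (f p), FR R (g p)⟫) * w p ∂ν ∂μ
      = ∫⁻ p, (∫⁻ R, ENNReal.ofReal (arccos ⟪FR R (f p), FR R (g p)⟫) ∂μ) * w p ∂ν := by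
        rw [lintegral_lintegral_swap (by fun_prop)]
        exact lintegral_congr fun p => lintegral_mul_const _ (by fun_prop)
    _ ≤ ∫⁻ p, 2 * ENNReal.ofReal (min (arccos ⟪f p, g p⟫) (π - arccos ⟪f p, g p⟫)) * w p ∂ν := by
        gcongr with p
        simpa only [angle, norm_FR, hf_norm, hg_norm, one_mul, div_one] using
          lintegral_angle_FR_le_two_mul_min (μ := μ) hd (hf_norm p) (hg_norm p)
    _ = 2 * ∫⁻ p, ENNReal.ofReal (min (arccos ⟪f p, g p⟫) (π - arccos ⟪f p, g p⟫)) * w p ∂ν := by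
        simp only [mul_assoc]
        exact lintegral_const_mul' _ _ ENNReal.ofNat_ne_top

end Averaging

theorem averaging_inequality_geodesic_general {X : Type*} [MeasurableSpace X] {d : ℕ} (hd : 2 ≤ d)
    (μ : Measure (SOd d)) [IsProbabilityMeasure μ] [μ.IsMulRightInvariant]
    (ν : Measure X) [SFinite ν] (n : X → EuclideanSpace ℝ (Fin d)) (hnmeas : Measurable n)
    (hnsph : ∀ x, ‖n x‖ = 1) (w : X → X → ℝ≥0∞) (hwmeas : Measurable fun p : X × X => w p.1 p.2) :
    ∫⁻ R, ∫⁻ x, ∫⁻ y, ENNReal.ofReal (arccos ⟪FR R (n x), FR R (n y)⟫) * w x y ∂ν ∂ν ∂μ ≤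
      2 * ∫⁻ x, ∫⁻ y,
        ENNReal.ofReal (min (arccos ⟪n x, n y⟫) (π - arccos ⟪n x, n y⟫)) * w x y ∂ν ∂ν := by
  have measurable_lhs (R : SOd d) : Measurable fun p : X × X =>
      ENNReal.ofReal (arccos ⟪FR R (n p.1), FR R (n p.2)⟫) * w p.1 p.2 := by
    fun_prop
  have measurable_rhs : Measurable fun p : X × X =>
      ENNReal.ofReal (min (arccos ⟪n p.1, n p.2⟫) (π - arccos ⟪n p.1, n p.2⟫)) * w p.1 p.2 := by
    fun_prop
  simpa only [lintegral_prod _ (measurable_lhs _).aemeasurable,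
    lintegral_prod _ measurable_rhs.aemeasurable] using
    lintegral_lintegral_arccos_inner_FR_le (μ := μ) (ν := ν.prod ν) hd
      (f := fun p => n p.1) (g := fun p => n p.2) (by fun_prop) (by fun_prop)
      (fun p => hnsph p.1) (fun p => hnsph p.2) hwmeas

lemma ofReal_div_mul_eq {a : ℝ} (ha : 0 ≤ a) (r s : ℝ) :
    ENNReal.ofReal (a / r * s) = ENNReal.ofReal a * ENNReal.ofReal (s / r) := by
  rw [← ENNReal.ofReal_mul ha]
  ring_nf

theorem averaging_inequality_geodesic
    (N d : ℕ) (hN : 1 ≤ N) (hd : 2 ≤ d)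
    (μ : Measure (SOd d)) [IsProbabilityMeasure μ]
    (hμleft : ∀ R₀ : SOd d, μ.map (fun R => R₀ * R) = μ)
    (hμright : ∀ R₀ : SOd d, μ.map (fun R => R * R₀) = μ)
    (Ω : Set (EuclideanSpace ℝ (Fin N))) (hΩ : IsOpen Ω)
    (n : EuclideanSpace ℝ (Fin N) → EuclideanSpace ℝ (Fin d))
    (hnmeas : Measurable n) (hnsph : ∀ x, ‖n x‖ = 1)
    (ρ : ℝ → ℝ) (hρmeas : Measurable ρ) (hρnonneg : ∀ r > (0 : ℝ), 0 ≤ ρ r) :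
    ∫⁻ R, (∫⁻ x in Ω, ∫⁻ y in Ω, ENNReal.ofReal
        (Real.arccos ⟪FR R (n x), FR R (n y)⟫ / ‖x - y‖ * ρ ‖x - y‖)) ∂μ ≤
    2 * ∫⁻ x in Ω, ∫⁻ y in Ω, ENNReal.ofReal
        (min (Real.arccos ⟪n x, n y⟫) (π - Real.arccos ⟪n x, n y⟫) / ‖x - y‖ * ρ ‖x - y‖) := by
  have : μ.IsMulRightInvariant := ⟨hμright⟩
  simpa only [ofReal_div_mul_eq (arccos_nonneg _), ofReal_div_mul_eq
    (le_min (arccos_nonneg _) (sub_nonneg.2 (arccos_le_pi _)))] using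
    averaging_inequality_geodesic_general hd μ (volume.restrict Ω) n hnmeas hnsph
      (fun x y => ENNReal.ofReal (ρ ‖x - y‖ / ‖x - y‖)) (by fun_prop)
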